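/- arXiv:1704.04191 — 3 statements merged into one kernel-verified Lean document; each statement's English description precedes it below -/
import Mathlib

section
/- Let F : ℝⁿ ⇉ ℝᵐ be a set-valued map whose graph is locally closed at (x̄, ȳ) ∈ gph F. Then F is strongly metrically subregular at x̄ for ȳ if and only if DF(x̄|ȳ)⁻¹(0) = {0}, which is equivalent to |DF(x̄|ȳ)⁻¹|⁺ < ∞; and in that case subreg(F; x̄|ȳ) = |DF(x̄|ȳ)⁻¹|⁺. -/
open Filter Topology Set Metric RealInnerProductSpace
open scoped ENNReal NNReal Pointwise

noncomputable section

/-- Graph of a set-valued map. -/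
def svGraph {α β : Type*} (F : α → Set β) : Set (α × β) := {p | p.2 ∈ F p.1}

/-- Inverse of a set-valued map. -/
def svInv {α β : Type*} (F : α → Set β) : β → Set α := fun y => {x | y ∈ F x}

/-- Local closedness of a set at a point of a metric space. -/
def LocClosedAt {α : Type*} [PseudoMetricSpace α] (s : Set α) (p : α) : Prop :=
  ∃ r : ℝ, 0 < r ∧ IsClosed (s ∩ Metric.closedBall p r)

section Cones

variable {X : Type*} [NormedAddCommGroup X] [NormedSpace ℝ X]

/-- Bouligand-Severi contingent cone. -/
def contingentCone (Ω : Set X) (x : X) : Set X :=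
  { u | ∃ (t : ℕ → ℝ) (uk : ℕ → X), (∀ k, 0 < t k) ∧
      Tendsto t atTop (𝓝 0) ∧ Tendsto uk atTop (𝓝 u) ∧ ∀ k, x + t k • uk k ∈ Ω }

/-- Bouligand paratingent cone. -/
def paratingentCone (Ω : Set X) (x : X) : Set X :=
  { u | ∃ (t : ℕ → ℝ) (uk : ℕ → X) (xk : ℕ → X), (∀ k, 0 < t k) ∧
      Tendsto t atTop (𝓝 0) ∧ Tendsto uk atTop (𝓝 u) ∧
      (∀ k, xk k ∈ Ω) ∧ Tendsto xk atTop (𝓝 x) ∧ ∀ k, xk k + t k • uk k ∈ Ω }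

end Cones

section NormalCones

variable {X : Type*} [NormedAddCommGroup X] [InnerProductSpace ℝ X]

/-- Fréchet (regular) normal cone. -/
def frechetNormalCone (Ω : Set X) (x : X) : Set X :=
  { v | ∀ ε : ℝ, 0 < ε → ∃ δ : ℝ, 0 < δ ∧ ∀ y ∈ Ω, ‖y - x‖ < δ →
      ⟪v, y - x⟫ ≤ ε * ‖y - x‖ }

/-- Limiting (Mordukhovich) normal cone. -/
def limitingNormalCone (Ω : Set X) (x : X) : Set X :=
  { v | ∃ (xk : ℕ → X) (vk : ℕ → X), (∀ k, xk k ∈ Ω) ∧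
      Tendsto xk atTop (𝓝 x) ∧ Tendsto vk atTop (𝓝 v) ∧
      ∀ k, vk k ∈ frechetNormalCone Ω (xk k) }

end NormalCones

section Derivatives

variable {E F : Type*} [NormedAddCommGroup E] [NormedSpace ℝ E]
  [NormedAddCommGroup F] [NormedSpace ℝ F]

/-- Graphical derivative. -/
def gDeriv (Fm : E → Set F) (x : E) (y : F) : E → Set F := fun u =>
  {v | (u, v) ∈ contingentCone (svGraph Fm) (x, y)}

/-- Strict graphical derivative. -/
def sgDeriv (Fm : E → Set F) (x : E) (y : F) : E → Set F := fun u =>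
  {v | (u, v) ∈ paratingentCone (svGraph Fm) (x, y)}

end Derivatives

section Coderivative

variable {E F : Type*} [NormedAddCommGroup E] [InnerProductSpace ℝ E]
  [NormedAddCommGroup F] [InnerProductSpace ℝ F]

/-- Coderivative: `w ∈ D*F(x|y)(z)` iff `(w, -z)` is in the limiting normal cone
to the graph of `F` (viewed inside the `ℓ²` product) at `(x, y)`. -/
def coDeriv (Fm : E → Set F) (x : E) (y : F) : F → Set E := fun z =>
  { w | (WithLp.equiv 2 (E × F)).symm (w, -z) ∈
      limitingNormalCone ((WithLp.equiv 2 (E × F)).symm '' svGraph Fm)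
        ((WithLp.equiv 2 (E × F)).symm (x, y)) }

end Coderivative

section Norms

variable {E F : Type*} [NormedAddCommGroup E] [NormedAddCommGroup F]

/-- Outer norm of a (positively homogeneous) set-valued map. -/
def outerNormSV (H : E → Set F) : ℝ≥0∞ :=
  ⨆ (x : E) (_ : ‖x‖ ≤ 1) (y : F) (_ : y ∈ H x), (‖y‖₊ : ℝ≥0∞)

/-- Inner norm of a (positively homogeneous) set-valued map. -/
def innerNormSV (H : E → Set F) : ℝ≥0∞ :=
  ⨆ (x : E) (_ : ‖x‖ ≤ 1), ⨅ (y : F) (_ : y ∈ H x), (‖y‖₊ : ℝ≥0∞)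

/-- Positive homogeneity of a set-valued map. -/
def PosHomogeneous {E F : Type*} [NormedAddCommGroup E] [NormedSpace ℝ E]
    [NormedAddCommGroup F] [NormedSpace ℝ F] (H : E → Set F) : Prop :=
  (0 : F) ∈ H 0 ∧ ∀ (c : ℝ), 0 < c → ∀ x, H (c • x) = c • (H x)

end Norms

section Stability

variable {E F : Type*} [NormedAddCommGroup E] [NormedAddCommGroup F]

/-- Metric regularity with constant `κ`. -/
def MetrRegWith (κ : ℝ≥0) (Fm : E → Set F) (xbar : E) (ybar : F) : Prop :=
  ∃ U ∈ 𝓝 xbar, ∃ V ∈ 𝓝 ybar, ∀ x ∈ U, ∀ y ∈ V,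
    EMetric.infEdist x (svInv Fm y) ≤ (κ : ℝ≥0∞) * EMetric.infEdist y (Fm x)

/-- The regularity modulus `reg (F; xbar|ybar)`. -/
def regMod (Fm : E → Set F) (xbar : E) (ybar : F) : ℝ≥0∞ :=
  ⨅ (κ : ℝ≥0) (_ : MetrRegWith κ Fm xbar ybar), (κ : ℝ≥0∞)

/-- Aubin property with constant `κ`. -/
def AubinWith (κ : ℝ≥0) (S : F → Set E) (ybar : F) (xbar : E) : Prop :=
  ∃ V ∈ 𝓝 ybar, ∃ U ∈ 𝓝 xbar, ∀ y ∈ V, ∀ y' ∈ V, ∀ x ∈ S y' ∩ U,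
    ∃ x' ∈ S y, ‖x - x'‖ ≤ (κ : ℝ) * ‖y - y'‖

/-- The Lipschitz modulus `lip (S; ybar|xbar)`. -/
def lipMod (S : F → Set E) (ybar : F) (xbar : E) : ℝ≥0∞ :=
  ⨅ (κ : ℝ≥0) (_ : AubinWith κ S ybar xbar), (κ : ℝ≥0∞)

/-- Strong metric subregularity with constant `κ`. -/
def SubregWith (κ : ℝ≥0) (Fm : E → Set F) (xbar : E) (ybar : F) : Prop :=
  ∃ U ∈ 𝓝 xbar, ∀ x ∈ U, (‖x - xbar‖₊ : ℝ≥0∞) ≤ (κ : ℝ≥0∞) * EMetric.infEdist ybar (Fm x)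

/-- The subregularity modulus `subreg (F; xbar|ybar)`. -/
def subregMod (Fm : E → Set F) (xbar : E) (ybar : F) : ℝ≥0∞ :=
  ⨅ (κ : ℝ≥0) (_ : SubregWith κ Fm xbar ybar), (κ : ℝ≥0∞)

/-- Isolated calmness with constant `κ`. -/
def CalmWith (κ : ℝ≥0) (S : F → Set E) (ybar : F) (xbar : E) : Prop :=
  ∃ V ∈ 𝓝 ybar, ∃ U ∈ 𝓝 xbar, ∀ y ∈ V, ∀ x ∈ S y ∩ U, ‖x - xbar‖ ≤ (κ : ℝ) * ‖y - ybar‖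

/-- The calmness modulus `clm (S; ybar|xbar)`. -/
def clmMod (S : F → Set E) (ybar : F) (xbar : E) : ℝ≥0∞ :=
  ⨅ (κ : ℝ≥0) (_ : CalmWith κ S ybar xbar), (κ : ℝ≥0∞)

/-- Strong metric regularity: metric regularity plus a single-valued localization
of the inverse. -/
def StrongMetrReg (Fm : E → Set F) (xbar : E) (ybar : F) : Prop :=
  (∃ κ : ℝ≥0, MetrRegWith κ Fm xbar ybar) ∧
  ∃ U ∈ 𝓝 xbar, ∃ V ∈ 𝓝 ybar, ∀ y ∈ V, (svInv Fm y ∩ U).Subsingleton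

end Stability

section StrongSubregularity

variable {E F : Type*} [NormedAddCommGroup E] [NormedAddCommGroup F]

lemma SubregWith.exists_nhds_norm_le {κ : ℝ≥0} {Fm : E → Set F} {xbar : E} {ybar : F}
    (h : SubregWith κ Fm xbar ybar) :
    ∃ U ∈ 𝓝 xbar, ∀ x ∈ U, ∀ y ∈ Fm x, ‖x - xbar‖ ≤ κ * ‖y - ybar‖ := by
  obtain ⟨U, hU, h⟩ := h
  refine ⟨U, hU, fun x hx y hy => ?_⟩
  have hle : (‖x - xbar‖₊ : ℝ≥0∞) ≤ (κ : ℝ≥0∞) * (‖y - ybar‖₊ : ℝ≥0∞) := by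
    refine (h x hx).trans ?_
    gcongr
    refine (infEDist_le_edist_of_mem hy).trans_eq ?_
    rw [edist_comm, edist_eq_enorm_sub, enorm_eq_nnnorm]
  exact_mod_cast hle

/-- A positive constant `κ` is needed: `0 * ⊤ = 0` makes `SubregWith 0` fail off the domain. -/
lemma subregWith_of_nhds_norm_le {κ : ℝ≥0} (hκ : 0 < κ) {Fm : E → Set F} {xbar : E} {ybar : F}
    {U : Set E} (hU : U ∈ 𝓝 xbar)
    (h : ∀ x ∈ U, ∀ y ∈ Fm x, ‖x - xbar‖ ≤ κ * ‖y - ybar‖) :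
    SubregWith κ Fm xbar ybar := by
  refine ⟨U, hU, fun x hx => ?_⟩
  have hκ0 : (κ : ℝ≥0∞) ≠ 0 := by exact_mod_cast hκ.ne'
  rw [← ENNReal.div_le_iff' hκ0 ENNReal.coe_ne_top]
  refine le_infEDist.2 fun y hy => ?_
  rw [ENNReal.div_le_iff' hκ0 ENNReal.coe_ne_top, edist_comm, edist_eq_enorm_sub,
    enorm_eq_nnnorm]
  have hle : ‖x - xbar‖₊ ≤ κ * ‖y - ybar‖₊ := h x hx y hy
  exact_mod_cast hle

lemma nnnorm_le_outerNormSV {H : E → Set F} {x : E} {y : F} (hx : ‖x‖ ≤ 1) (hy : y ∈ H x) :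
    (‖y‖₊ : ℝ≥0∞) ≤ outerNormSV H :=
  le_iSup₂_of_le x hx (le_iSup₂_of_le y hy le_rfl)

variable [NormedSpace ℝ E] [NormedSpace ℝ F]

lemma smul_mem_contingentCone {Ω : Set E} {x u : E} (hu : u ∈ contingentCone Ω x)
    {c : ℝ} (hc : 0 < c) : c • u ∈ contingentCone Ω x := by
  obtain ⟨t, uk, ht, ht0, huk, hmem⟩ := hu
  refine ⟨fun k => t k / c, fun k => c • uk k, fun k => div_pos (ht k) hc, ?_,
    huk.const_smul c, fun k => ?_⟩
  · simpa using ht0.div_const c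
  · rw [smul_smul, div_mul_cancel₀ _ hc.ne']
    exact hmem k

lemma zero_mem_contingentCone {Ω : Set E} {x : E} (hx : x ∈ Ω) : 0 ∈ contingentCone Ω x :=
  ⟨fun k => 1 / ((k : ℝ) + 1), fun _ => 0, fun _ => Nat.one_div_pos_of_nat,
    tendsto_one_div_add_atTop_nhds_zero_nat, tendsto_const_nhds, fun _ => by simpa using hx⟩

lemma smul_mem_gDeriv {Fm : E → Set F} {xbar u : E} {ybar v : F}
    (h : v ∈ gDeriv Fm xbar ybar u) {c : ℝ} (hc : 0 < c) :
    c • v ∈ gDeriv Fm xbar ybar (c • u) :=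
  smul_mem_contingentCone h hc

lemma SubregWith.norm_le_of_mem_gDeriv {κ : ℝ≥0} {Fm : E → Set F} {xbar u : E} {ybar v : F}
    (h : SubregWith κ Fm xbar ybar) (huv : v ∈ gDeriv Fm xbar ybar u) : ‖u‖ ≤ κ * ‖v‖ := by
  obtain ⟨U, hU, h⟩ := h.exists_nhds_norm_le
  obtain ⟨t, w, ht, ht0, hw, hmem⟩ := huv
  have hu : Tendsto (fun k => (w k).1) atTop (𝓝 u) := (continuous_fst.tendsto _).comp hw
  have hv : Tendsto (fun k => (w k).2) atTop (𝓝 v) := (continuous_snd.tendsto _).comp hw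
  have hx : Tendsto (fun k => xbar + t k • (w k).1) atTop (𝓝 xbar) := by
    simpa using (ht0.smul hu).const_add xbar
  refine le_of_tendsto_of_tendsto hu.norm (hv.norm.const_mul (κ : ℝ)) ?_
  filter_upwards [hx hU] with k hk
  have hle := h _ hk _ (hmem k)
  simp only [Prod.snd_add, Prod.smul_snd, add_sub_cancel_left, norm_smul, Real.norm_eq_abs,
    abs_of_pos (ht k)] at hle
  refine le_of_mul_le_mul_left ?_ (ht k)
  linarith

lemma SubregWith.outerNormSV_le {κ : ℝ≥0} {Fm : E → Set F} {xbar : E} {ybar : F}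
    (h : SubregWith κ Fm xbar ybar) : outerNormSV (svInv (gDeriv Fm xbar ybar)) ≤ κ := by
  refine iSup₂_le fun v hv => iSup₂_le fun u hu => ?_
  have hle : ‖u‖ ≤ κ :=
    (h.norm_le_of_mem_gDeriv hu).trans (mul_le_of_le_one_right κ.coe_nonneg hv)
  exact_mod_cast hle

lemma svInv_gDeriv_zero_eq_of_outerNormSV_lt_top {Fm : E → Set F} {xbar : E} {ybar : F}
    (hgr : ybar ∈ Fm xbar) (h : outerNormSV (svInv (gDeriv Fm xbar ybar)) < ⊤) :
    svInv (gDeriv Fm xbar ybar) 0 = {0} := by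
  refine Subset.antisymm (fun u hu => ?_) (singleton_subset_iff.2 ?_)
  · by_contra hu0
    have hpos : 0 < ‖u‖ := norm_pos_iff.2 hu0
    set M := (outerNormSV (svInv (gDeriv Fm xbar ybar))).toReal with hM
    have hc : 0 < (M + 1) / ‖u‖ := by positivity
    have hmem : ((M + 1) / ‖u‖) • u ∈ svInv (gDeriv Fm xbar ybar) 0 := by
      simpa [svInv] using smul_mem_gDeriv hu hc
    have hle := ENNReal.toReal_mono h.ne (nnnorm_le_outerNormSV (by simp) hmem)
    rw [ENNReal.coe_toReal, coe_nnnorm, norm_smul, Real.norm_of_nonneg hc.le,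
      div_mul_cancel₀ _ hpos.ne', ← hM] at hle
    linarith
  · exact zero_mem_contingentCone (Ω := svGraph Fm) (x := (xbar, ybar)) hgr

/-- If subregularity fails for constants `κ k` with `(κ k)⁻¹ → L`, then the graphical derivative
has a point `(u, v)` of its graph with `‖u‖ = 1` and `‖v‖ ≤ L`. -/
lemma exists_mem_gDeriv_of_not_subregWith [ProperSpace E] [ProperSpace F]
    {Fm : E → Set F} {xbar : E} {ybar : F} {κ : ℕ → ℝ≥0} {L : ℝ} (hκ : ∀ k, 0 < κ k)
    (hL : Tendsto (fun k => ((κ k : ℝ))⁻¹) atTop (𝓝 L))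
    (h : ∀ k, ¬ SubregWith (κ k) Fm xbar ybar) :
    ∃ u v, v ∈ gDeriv Fm xbar ybar u ∧ ‖u‖ = 1 ∧ ‖v‖ ≤ L := by
  have hex : ∀ k : ℕ, ∃ x y, y ∈ Fm x ∧ ‖x - xbar‖ < 1 / ((k : ℝ) + 1) ∧
      κ k * ‖y - ybar‖ < ‖x - xbar‖ := by
    intro k
    by_contra! hcon
    exact h k (subregWith_of_nhds_norm_le (hκ k) (ball_mem_nhds xbar Nat.one_div_pos_of_nat)
      fun x hx y hy => hcon x y hy (mem_ball_iff_norm.1 hx))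
  choose x y hy hx hlt using hex
  have ht : ∀ k, 0 < ‖x k - xbar‖ := fun k => lt_of_le_of_lt (by positivity) (hlt k)
  have ht0 : Tendsto (fun k => ‖x k - xbar‖) atTop (𝓝 0) :=
    squeeze_zero (fun _ => norm_nonneg _) (fun k => (hx k).le)
      tendsto_one_div_add_atTop_nhds_zero_nat
  set w : ℕ → E × F := fun k => ‖x k - xbar‖⁻¹ • (x k - xbar, y k - ybar) with hw
  have hw1 : ∀ k, ‖(w k).1‖ = 1 := fun k => by
    simp [hw, norm_smul, (ht k).ne']
  have hw2 : ∀ k, ‖(w k).2‖ ≤ ((κ k : ℝ))⁻¹ := fun k => by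
    have hκk : (0 : ℝ) < κ k := hκ k
    have hle : ‖(w k).2‖ = ‖x k - xbar‖⁻¹ * ‖y k - ybar‖ := by simp [hw, norm_smul]
    rw [hle, inv_mul_le_iff₀ (ht k), ← div_eq_mul_inv, le_div_iff₀ hκk, mul_comm]
    exact (hlt k).le
  obtain ⟨B, hB⟩ := hL.bddAbove_range
  have hbdd : ∀ k, w k ∈ closedBall (0 : E × F) (max 1 B) := fun k => by
    rw [mem_closedBall_zero_iff, Prod.norm_def]
    exact max_le_max (hw1 k).le ((hw2 k).trans (hB (mem_range_self k)))
  obtain ⟨⟨u, v⟩, -, φ, hφ, hlim⟩ :=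
    (isCompact_closedBall (0 : E × F) (max 1 B)).tendsto_subseq hbdd
  have hu : Tendsto (fun k => ‖(w (φ k)).1‖) atTop (𝓝 ‖u‖) :=
    ((continuous_fst.tendsto _).comp hlim).norm
  have hv : Tendsto (fun k => ‖(w (φ k)).2‖) atTop (𝓝 ‖v‖) :=
    ((continuous_snd.tendsto _).comp hlim).norm
  refine ⟨u, v, ⟨fun k => ‖x (φ k) - xbar‖, w ∘ φ, fun k => ht _,
    ht0.comp hφ.tendsto_atTop, hlim, fun k => ?_⟩, ?_, ?_⟩
  · have heq : (xbar, ybar) + ‖x (φ k) - xbar‖ • (w ∘ φ) k = (x (φ k), y (φ k)) := by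
      rw [Function.comp_apply, hw, smul_inv_smul₀ (ht _).ne']
      simp
    rw [heq]
    exact hy (φ k)
  · exact tendsto_nhds_unique hu (by simp only [hw1]; exact tendsto_const_nhds)
  · exact le_of_tendsto_of_tendsto' hv (hL.comp hφ.tendsto_atTop) fun k => hw2 _

lemma exists_subregWith_of_svInv_gDeriv_zero_eq [ProperSpace E] [ProperSpace F]
    {Fm : E → Set F} {xbar : E} {ybar : F} (h : svInv (gDeriv Fm xbar ybar) 0 = {0}) :
    ∃ κ : ℝ≥0, SubregWith κ Fm xbar ybar := by
  by_contra! hcon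
  have hL : Tendsto (fun k : ℕ => ((((k : ℝ≥0) + 1 : ℝ≥0) : ℝ))⁻¹) atTop (𝓝 0) := by
    simpa using tendsto_one_div_add_atTop_nhds_zero_nat (𝕜 := ℝ)
  obtain ⟨u, v, huv, hu, hv⟩ := exists_mem_gDeriv_of_not_subregWith
    (fun k : ℕ => by positivity) hL fun k => hcon _
  obtain rfl := norm_le_zero_iff.1 hv
  have hu0 : u ∈ ({0} : Set E) := h ▸ huv
  rw [mem_singleton_iff.1 hu0, norm_zero] at hu
  exact zero_ne_one hu

lemma subregWith_of_outerNormSV_lt [ProperSpace E] [ProperSpace F]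
    {Fm : E → Set F} {xbar : E} {ybar : F} {κ : ℝ≥0}
    (h : outerNormSV (svInv (gDeriv Fm xbar ybar)) < κ) : SubregWith κ Fm xbar ybar := by
  by_contra hcon
  have hκ : 0 < κ := by exact_mod_cast pos_of_gt h
  have hκ' : (0 : ℝ) < κ := hκ
  obtain ⟨u, v, huv, hu, hv⟩ := exists_mem_gDeriv_of_not_subregWith
    (κ := fun _ => κ) (fun _ => hκ) tendsto_const_nhds fun _ => hcon
  have hle : ‖(κ : ℝ) • v‖ ≤ 1 := by
    rw [norm_smul, Real.norm_of_nonneg hκ'.le]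
    exact (mul_le_mul_of_nonneg_left hv hκ'.le).trans_eq (mul_inv_cancel₀ hκ'.ne')
  have hnorm : ‖(κ : ℝ) • u‖₊ = κ := by
    apply NNReal.eq
    rw [coe_nnnorm, norm_smul, hu, mul_one, Real.norm_of_nonneg hκ'.le]
  have hκle := nnnorm_le_outerNormSV (H := svInv (gDeriv Fm xbar ybar)) hle
    (smul_mem_gDeriv huv hκ')
  rw [hnorm] at hκle
  exact hκle.not_gt h

lemma subregMod_eq_outerNormSV [ProperSpace E] [ProperSpace F]
    (Fm : E → Set F) (xbar : E) (ybar : F) :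
    subregMod Fm xbar ybar = outerNormSV (svInv (gDeriv Fm xbar ybar)) := by
  refine le_antisymm (le_of_forall_gt_imp_ge_of_dense fun a ha => ?_)
    (le_iInf₂ fun _ hκ => SubregWith.outerNormSV_le hκ)
  obtain ⟨κ, hκ, hκa⟩ := ENNReal.lt_iff_exists_nnreal_btwn.1 ha
  exact iInf₂_le_of_le κ (subregWith_of_outerNormSV_lt hκ) hκa.le

end StrongSubregularity

/-- Graphical derivative criterion for strong metric subregularity. -/
theorem gDeriv_criterion_for_strong_subregularity {n m : ℕ}
    (Fm : EuclideanSpace ℝ (Fin n) → Set (EuclideanSpace ℝ (Fin m)))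
    (xbar : EuclideanSpace ℝ (Fin n)) (ybar : EuclideanSpace ℝ (Fin m))
    (hgr : ybar ∈ Fm xbar) (hloc : LocClosedAt (svGraph Fm) (xbar, ybar)) :
    ((∃ κ : ℝ≥0, SubregWith κ Fm xbar ybar) ↔
      svInv (gDeriv Fm xbar ybar) 0 = {0}) ∧
    (svInv (gDeriv Fm xbar ybar) 0 = {0} ↔
      outerNormSV (svInv (gDeriv Fm xbar ybar)) < ⊤) ∧
    ((∃ κ : ℝ≥0, SubregWith κ Fm xbar ybar) →
      subregMod Fm xbar ybar = outerNormSV (svInv (gDeriv Fm xbar ybar))) := by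
  have hfin : (∃ κ : ℝ≥0, SubregWith κ Fm xbar ybar) →
      outerNormSV (svInv (gDeriv Fm xbar ybar)) < ⊤ :=
    fun ⟨_, hκ⟩ => hκ.outerNormSV_le.trans_lt ENNReal.coe_lt_top
  refine ⟨⟨fun h => svInv_gDeriv_zero_eq_of_outerNormSV_lt_top hgr (hfin h),
      exists_subregWith_of_svInv_gDeriv_zero_eq⟩,
    ⟨fun h => hfin (exists_subregWith_of_svInv_gDeriv_zero_eq h),
      svInv_gDeriv_zero_eq_of_outerNormSV_lt_top hgr⟩,
    fun _ => subregMod_eq_outerNormSV Fm xbar ybar⟩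

end
end

section
/- Let F : ℝⁿ ⇉ ℝᵐ be a set-valued map and (x̄, ȳ) ∈ gph F. If F is strongly metrically regular at x̄ for ȳ, then |D̃F(x̄|ȳ)⁻¹|⁺ < ∞. Conversely, if the graph of F is locally closed at (x̄, ȳ) and x̄ ∈ liminf_{y → ȳ} F⁻¹(y) (i.e., for every ε > 0 there is a neighborhood V of ȳ such that F⁻¹(y) ∩ B_ε(x̄) ≠ ∅ for all y ∈ V), then |D̃F(x̄|ȳ)⁻¹|⁺ < ∞ implies that F is strongly metrically regular at x̄ for ȳ, and in that case reg(F; x̄|ȳ) = |D̃F(x̄|ȳ)⁻¹|⁺. -/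
open Filter Topology Set Metric RealInnerProductSpace
open scoped ENNReal NNReal Pointwise

noncomputable section

section Criterion

lemma tendsto_of_forall_mem_ball_one_div {α : Type*} [PseudoMetricSpace α] {z : α} {f : ℕ → α}
    (hf : ∀ k : ℕ, f k ∈ ball z (1 / ((k : ℝ) + 1))) : Tendsto f atTop (𝓝 z) :=
  tendsto_iff_dist_tendsto_zero.2 (squeeze_zero (fun _ => dist_nonneg)
    (fun k => (mem_ball.1 (hf k)).le) tendsto_one_div_add_atTop_nhds_zero_nat)

variable {E F : Type*} [NormedAddCommGroup E] [NormedAddCommGroup F]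

/-- Metric regularity with constant `κ` and a single-valued localization of the inverse make the
inverse Lipschitz with constant `κ` along the graph near the reference point. -/
lemma norm_sub_le_of_metrRegWith {Fm : E → Set F} {xbar : E} {ybar : F} {κ : ℝ≥0}
    (hreg : MetrRegWith κ Fm xbar ybar)
    (hsv : ∃ U ∈ 𝓝 xbar, ∃ V ∈ 𝓝 ybar, ∀ y ∈ V, (svInv Fm y ∩ U).Subsingleton) :
    ∃ δ > 0, ∀ x ∈ ball xbar δ, ∀ x' ∈ ball xbar δ, ∀ y ∈ ball ybar δ, ∀ y' ∈ ball ybar δ,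
      y ∈ Fm x → y' ∈ Fm x' → ‖x' - x‖ ≤ κ * ‖y' - y‖ := by
  obtain ⟨U₁, hU₁, V₁, hV₁, hreg⟩ := hreg
  obtain ⟨U₂, hU₂, V₂, hV₂, hsv⟩ := hsv
  obtain ⟨a, ha, haU⟩ := Metric.mem_nhds_iff.1 (inter_mem hU₁ hU₂)
  obtain ⟨b, hb, hbV⟩ := Metric.mem_nhds_iff.1 (inter_mem hV₁ hV₂)
  have hκ : (0 : ℝ) < κ + 1 := by positivity
  refine ⟨min (min (a / 2) b) (a / (4 * (κ + 1))), by positivity, ?_⟩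
  intro x hx x' hx' y hy y' hy' hyx hyx'
  simp only [mem_ball, lt_min_iff] at hx hx' hy hy'
  have hinf : Metric.infEDist x (svInv Fm y') ≤ (κ : ℝ≥0∞) * edist y' y :=
    (hreg x (haU (mem_ball.2 (by linarith))).1 y' (hbV (mem_ball.2 hy'.1.2)).1).trans
      (mul_le_mul_right (Metric.infEDist_le_edist_of_mem hyx) _)
  have hyd : κ * dist y' y < a / 2 := by
    have h1 : dist y' y < 2 * (a / (4 * (κ + 1))) := by
      linarith [dist_triangle_right y' y ybar]
    have h2 : (κ + 1) * (2 * (a / (4 * (κ + 1)))) = a / 2 := by field_simp; norm_num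
    nlinarith [dist_nonneg (x := y') (y := y)]
  have hdist : ∀ c : ℝ, κ * dist y' y < c → c ≤ a / 2 → dist x x' ≤ c := by
    intro c hc hca
    have hlt : Metric.infEDist x (svInv Fm y') < ENNReal.ofReal c := by
      refine hinf.trans_lt ?_
      rw [edist_dist, ← ENNReal.ofReal_coe_nnreal, ← ENNReal.ofReal_mul κ.coe_nonneg]
      exact (ENNReal.ofReal_lt_ofReal_iff_of_nonneg (by positivity)).2 hc
    obtain ⟨z, hz, hxz⟩ := Metric.infEDist_lt_iff.1 hlt
    have hxz' : dist x z < c := by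
      rw [edist_dist] at hxz
      exact (ENNReal.ofReal_lt_ofReal_iff_of_nonneg dist_nonneg).1 hxz
    have hzU : z ∈ ball xbar a := by
      rw [mem_ball]
      linarith [dist_triangle_left z xbar x]
    have : z = x' := hsv y' (hbV (mem_ball.2 hy'.1.2)).2 ⟨hz, (haU hzU).2⟩
      ⟨hyx', (haU (mem_ball.2 (by linarith))).2⟩
    exact this ▸ hxz'.le
  rw [← dist_eq_norm, ← dist_eq_norm, dist_comm x' x]
  refine le_of_forall_gt_imp_ge_of_dense fun c hc => ?_
  rcases le_total c (a / 2) with h | h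
  · exact hdist c hc h
  · exact (hdist _ hyd le_rfl).trans h

lemma metrRegWith_of_norm_sub_le {Fm : E → Set F} {xbar : E} {ybar : F} {κ : ℝ≥0} (hκ : 0 < κ)
    (hinner : ∀ ε : ℝ, 0 < ε →
      ∃ V ∈ 𝓝 ybar, ∀ y ∈ V, (svInv Fm y ∩ Metric.ball xbar ε).Nonempty)
    (hlip : ∃ δ > 0, ∀ x ∈ ball xbar δ, ∀ x' ∈ ball xbar δ, ∀ y ∈ ball ybar δ, ∀ y' ∈ ball ybar δ,
      y ∈ Fm x → y' ∈ Fm x' → ‖x' - x‖ ≤ κ * ‖y' - y‖) :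
    MetrRegWith κ Fm xbar ybar := by
  have hκ' : (0 : ℝ) < κ := hκ
  obtain ⟨δ, hδ, hlip⟩ := hlip
  set ε : ℝ := min δ (κ * δ / 4) with hε
  have hεpos : 0 < ε := by positivity
  have hεδ : ε ≤ δ := min_le_left _ _
  have hεκ : ε ≤ κ * δ / 4 := min_le_right _ _
  obtain ⟨V, hV, hne⟩ := hinner ε hεpos
  refine ⟨ball xbar ε, ball_mem_nhds _ hεpos, V ∩ ball ybar (δ / 2),
    inter_mem hV (ball_mem_nhds _ (by positivity)), fun x hx y hy => ?_⟩
  obtain ⟨z, hzy, hz⟩ := hne y hy.1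
  have hyδ := mem_ball.1 hy.2
  rw [← ENNReal.div_le_iff' (by simp [hκ.ne']) (by simp)]
  refine Metric.le_infEDist.2 fun y' hy' => ?_
  rw [ENNReal.div_le_iff' (by simp [hκ.ne']) (by simp)]
  refine (Metric.infEDist_le_edist_of_mem hzy).trans ?_
  have key : dist x z ≤ κ * dist y y' := by
    by_cases hyb : y' ∈ ball ybar δ
    · have := hlip x (ball_subset_ball hεδ hx) z (ball_subset_ball hεδ hz) y' hyb y
        (mem_ball.2 (by linarith)) hy' hzy
      rwa [← dist_eq_norm, ← dist_eq_norm, dist_comm z x] at this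
    · rw [mem_ball, not_lt] at hyb
      rw [mem_ball] at hx hz
      have h1 := dist_triangle_right x z xbar
      have h2 := dist_triangle_left y' ybar y
      nlinarith
  rw [edist_dist, edist_dist, ← ENNReal.ofReal_coe_nnreal,
    ← ENNReal.ofReal_mul κ.coe_nonneg]
  exact ENNReal.ofReal_le_ofReal key

lemma exists_subsingleton_localization_of_norm_sub_le {Fm : E → Set F} {xbar : E} {ybar : F}
    {κ : ℝ≥0}
    (hlip : ∃ δ > 0, ∀ x ∈ ball xbar δ, ∀ x' ∈ ball xbar δ, ∀ y ∈ ball ybar δ, ∀ y' ∈ ball ybar δ,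
      y ∈ Fm x → y' ∈ Fm x' → ‖x' - x‖ ≤ κ * ‖y' - y‖) :
    ∃ U ∈ 𝓝 xbar, ∃ V ∈ 𝓝 ybar, ∀ y ∈ V, (svInv Fm y ∩ U).Subsingleton := by
  obtain ⟨δ, hδ, hlip⟩ := hlip
  refine ⟨_, ball_mem_nhds _ hδ, _, ball_mem_nhds _ hδ, fun y hy x hx x' hx' => ?_⟩
  have := hlip x' hx'.2 x hx.2 y hy y hy hx'.1 hx.1
  rw [sub_self, norm_zero, mul_zero, norm_le_zero_iff] at this
  exact sub_eq_zero.1 this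

variable [NormedSpace ℝ E] [NormedSpace ℝ F]

lemma outerNormSV_svInv_sgDeriv_le {Fm : E → Set F} {xbar : E} {ybar : F} {κ : ℝ≥0}
    (hreg : MetrRegWith κ Fm xbar ybar)
    (hsv : ∃ U ∈ 𝓝 xbar, ∃ V ∈ 𝓝 ybar, ∀ y ∈ V, (svInv Fm y ∩ U).Subsingleton) :
    outerNormSV (svInv (sgDeriv Fm xbar ybar)) ≤ κ := by
  obtain ⟨δ, hδ, hlip⟩ := norm_sub_le_of_metrRegWith hreg hsv
  refine iSup_le fun v => iSup_le fun hv => iSup_le fun u => iSup_le fun hu => ?_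
  obtain ⟨t, w, p, ht, ht0, hw, hp, hpx, hpw⟩ := hu
  have hq : Tendsto (fun k => p k + t k • w k) atTop (𝓝 (xbar, ybar)) := by
    simpa using hpx.add (ht0.smul hw)
  have hball : ball xbar δ ×ˢ ball ybar δ ∈ 𝓝 (xbar, ybar) :=
    prod_mem_nhds (ball_mem_nhds _ hδ) (ball_mem_nhds _ hδ)
  have hle : ∀ᶠ k in atTop, ‖(w k).1‖ ≤ κ * ‖(w k).2‖ := by
    filter_upwards [hpx hball, hq hball] with k h1 h2
    have h := hlip _ h1.1 _ h2.1 _ h1.2 _ h2.2 (hp k) (hpw k)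
    simp only [Prod.fst_add, Prod.snd_add, Prod.smul_fst, Prod.smul_snd, add_sub_cancel_left,
      norm_smul, Real.norm_of_nonneg (ht k).le] at h
    exact le_of_mul_le_mul_left (by linarith) (ht k)
  have huv : ‖u‖ ≤ κ * ‖v‖ :=
    le_of_tendsto_of_tendsto hw.fst_nhds.norm (hw.snd_nhds.norm.const_mul _) hle
  have : ‖u‖₊ ≤ κ := by
    rw [← NNReal.coe_le_coe, coe_nnnorm]
    nlinarith [κ.coe_nonneg]
  exact_mod_cast this

/-- A strict bound on the outer norm of the inverse of the strict graphical derivative makes the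
inverse map Lipschitz along the graph near the reference point. -/
lemma norm_sub_le_of_outerNormSV_lt [ProperSpace E] [ProperSpace F]
    {Fm : E → Set F} {xbar : E} {ybar : F} {κ : ℝ≥0}
    (h : outerNormSV (svInv (sgDeriv Fm xbar ybar)) < κ) :
    ∃ δ > 0, ∀ x ∈ ball xbar δ, ∀ x' ∈ ball xbar δ, ∀ y ∈ ball ybar δ, ∀ y' ∈ ball ybar δ,
      y ∈ Fm x → y' ∈ Fm x' → ‖x' - x‖ ≤ κ * ‖y' - y‖ := by
  have hκ : (0 : ℝ) < κ := by exact_mod_cast (zero_le).trans_lt h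
  by_contra! hcon
  choose x hx x' hx' y hy y' hy' hyx hyx' hlt using
    fun k : ℕ => hcon (1 / ((k : ℝ) + 1)) Nat.one_div_pos_of_nat
  have hX := tendsto_of_forall_mem_ball_one_div hx
  have hX' := tendsto_of_forall_mem_ball_one_div hx'
  have hY := tendsto_of_forall_mem_ball_one_div hy
  set t : ℕ → ℝ := fun k => ‖x' k - x k‖ / κ with ht
  have htpos : ∀ k, 0 < t k := fun k =>
    div_pos ((by positivity : (0 : ℝ) ≤ κ * ‖y' k - y k‖).trans_lt (hlt k)) hκ
  have ht0 : Tendsto t atTop (𝓝 0) := by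
    simpa using (hX'.sub hX).norm.div_const (κ : ℝ)
  set u : ℕ → E := fun k => (t k)⁻¹ • (x' k - x k) with hu
  set v : ℕ → F := fun k => (t k)⁻¹ • (y' k - y k) with hv
  have hun : ∀ k, ‖u k‖ = κ := by
    intro k
    have h1 : ‖x' k - x k‖ = κ * t k := by simp only [ht]; field_simp
    rw [hu, norm_smul, norm_inv, Real.norm_of_nonneg (htpos k).le, h1]
    field_simp [(htpos k).ne']
  have hvn : ∀ k, ‖v k‖ ≤ 1 := by
    intro k
    rw [hv, norm_smul, norm_inv, Real.norm_of_nonneg (htpos k).le, inv_mul_le_iff₀ (htpos k),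
      mul_one]
    simp only [ht]
    rw [le_div_iff₀ hκ, mul_comm]
    exact (hlt k).le
  obtain ⟨⟨a, b⟩, hab, φ, hφ, hlim⟩ :=
    ((isCompact_sphere (0 : E) κ).prod (isCompact_closedBall (0 : F) 1)).tendsto_subseq
      (x := fun k => (u k, v k)) fun k => by simp [hun, hvn]
  simp only [mem_prod, mem_sphere_iff_norm, sub_zero, mem_closedBall_zero_iff] at hab
  have hmem : a ∈ svInv (sgDeriv Fm xbar ybar) b := by
    refine ⟨t ∘ φ, fun k => (u (φ k), v (φ k)), fun k => (x (φ k), y (φ k)), fun k => htpos _,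
      ht0.comp hφ.tendsto_atTop, hlim, fun k => hyx _,
      (hX.prodMk_nhds hY).comp hφ.tendsto_atTop, fun k => ?_⟩
    have h1 : t (φ k) • u (φ k) = x' (φ k) - x (φ k) := smul_inv_smul₀ (htpos _).ne' _
    have h2 : t (φ k) • v (φ k) = y' (φ k) - y (φ k) := smul_inv_smul₀ (htpos _).ne' _
    simp only [Function.comp_apply, Prod.smul_mk, h1, h2, Prod.mk_add_mk, add_sub_cancel]
    exact hyx' _
  have hle : (‖a‖₊ : ℝ≥0∞) ≤ outerNormSV (svInv (sgDeriv Fm xbar ybar)) :=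
    le_iSup₂_of_le b hab.2 (le_iSup₂_of_le a hmem le_rfl)
  have ha : ‖a‖₊ = κ := NNReal.eq hab.1
  exact (ha ▸ hle).not_gt h

end Criterion

/-- Strict graphical derivative criterion for strong metric regularity. -/
theorem sgDeriv_criterion_for_strong_metric_regularity {n m : ℕ}
    (Fm : EuclideanSpace ℝ (Fin n) → Set (EuclideanSpace ℝ (Fin m)))
    (xbar : EuclideanSpace ℝ (Fin n)) (ybar : EuclideanSpace ℝ (Fin m))
    (hgr : ybar ∈ Fm xbar) :
    (StrongMetrReg Fm xbar ybar → outerNormSV (svInv (sgDeriv Fm xbar ybar)) < ⊤) ∧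
    (LocClosedAt (svGraph Fm) (xbar, ybar) →
      (∀ ε : ℝ, 0 < ε → ∃ V ∈ 𝓝 ybar, ∀ y ∈ V, (svInv Fm y ∩ Metric.ball xbar ε).Nonempty) →
      outerNormSV (svInv (sgDeriv Fm xbar ybar)) < ⊤ →
      StrongMetrReg Fm xbar ybar ∧
        regMod Fm xbar ybar = outerNormSV (svInv (sgDeriv Fm xbar ybar))) := by
  refine ⟨fun ⟨⟨κ, hκ⟩, hsv⟩ => (outerNormSV_svInv_sgDeriv_le hκ hsv).trans_lt ENNReal.coe_lt_top,
    fun _ hinner hfin => ?_⟩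
  have hreg : ∀ κ : ℝ≥0, outerNormSV (svInv (sgDeriv Fm xbar ybar)) < κ →
      MetrRegWith κ Fm xbar ybar := fun κ hκ =>
    metrRegWith_of_norm_sub_le (by exact_mod_cast zero_le.trans_lt hκ) hinner
      (norm_sub_le_of_outerNormSV_lt hκ)
  obtain ⟨κ, hκ, -⟩ := ENNReal.lt_iff_exists_nnreal_btwn.1 hfin
  have hsv := exists_subsingleton_localization_of_norm_sub_le (norm_sub_le_of_outerNormSV_lt hκ)
  refine ⟨⟨⟨κ, hreg κ hκ⟩, hsv⟩, le_antisymm ?_ ?_⟩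
  · refine le_of_forall_gt_imp_ge_of_dense fun c hc => ?_
    obtain ⟨κ', hκ', hc'⟩ := ENNReal.lt_iff_exists_nnreal_btwn.1 hc
    exact (iInf₂_le κ' (hreg κ' hκ')).trans hc'.le
  · exact le_iInf₂ fun κ' hκ' => outerNormSV_svInv_sgDeriv_le hκ' hsv

end
end

section
/- Let f : ℝⁿ → ℝⁿ be continuously differentiable, F : ℝᵐ ⇉ ℝᵐ a set-valued map with closed graph, B an injective n×m real matrix and C an m×n real matrix. Define Φ(z) = f(z) + B F(Cz), F_C(u) = F(u) if u = Cz for some z ∈ ℝⁿ and F_C(u) = ∅ otherwise. Let (z̄, p̄) ∈ gph Φ and set v̄ = (BᵀB)⁻¹Bᵀ(p̄ − f(z̄)). Then for every ξ ∈ ℝⁿ, D*Φ(z̄ | p̄)(ξ) = ∇f(z̄)ᵀ ξ + Cᵀ D*F_C(Cz̄ | v̄)(Bᵀ ξ). -/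
open Filter Topology Set Metric RealInnerProductSpace
open scoped ENNReal NNReal Pointwise

noncomputable section

section FrechetNormals

variable {X Y : Type*} [NormedAddCommGroup X] [InnerProductSpace ℝ X]
  [NormedAddCommGroup Y] [InnerProductSpace ℝ Y]

theorem mem_frechetNormalCone_iff_eventually {Ω : Set X} {x v : X} :
    v ∈ frechetNormalCone Ω x ↔
      ∀ ε : ℝ, 0 < ε → ∀ᶠ y in 𝓝[Ω] x, ⟪v, y - x⟫ ≤ ε * ‖y - x‖ := by
  simp only [frechetNormalCone, mem_ofPred_eq, eventually_nhdsWithin_iff, Metric.eventually_nhds_iff,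
    dist_eq_norm]
  refine forall₂_congr fun ε _ => exists_congr fun δ => and_congr_right fun _ => ?_
  exact ⟨fun h y h1 h2 => h y h2 h1, fun h y h1 h2 => h h2 h1⟩

/-- A vector `w` is Fréchet normal to `Ω` as soon as, along `Ω`, it agrees to first order with the
pullback of a Fréchet normal `v` to `Θ` under a map `φ` sending `Ω` into `Θ`. -/
theorem frechetNormalCone_of_pullback {Ω : Set X} {Θ : Set Y} {φ : X → Y} {x w : X} {v : Y}
    (hφ : MapsTo φ Ω Θ) (hd : DifferentiableAt ℝ φ x) {r : X → ℝ}
    (hr : r =o[𝓝 x] fun y => y - x)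
    (hw : ∀ y ∈ Ω, ⟪w, y - x⟫ = ⟪v, φ y - φ x⟫ + r y)
    (hv : v ∈ frechetNormalCone Θ (φ x)) : w ∈ frechetNormalCone Ω x := by
  rw [mem_frechetNormalCone_iff_eventually] at hv ⊢
  intro ε hε
  obtain ⟨K, hK, hO⟩ := hd.isBigO_sub.exists_pos
  have h1 := (hd.continuousAt.continuousWithinAt.tendsto_nhdsWithin hφ).eventually (hv (ε / (2 * K)) (by positivity))
  filter_upwards [h1, nhdsWithin_le_nhds hO.bound,
    nhdsWithin_le_nhds (hr.bound (half_pos hε)), self_mem_nhdsWithin] with y h1 h2 h3 hy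
  rw [hw y hy]
  have h4 : ε / (2 * K) * ‖φ y - φ x‖ ≤ ε / (2 * K) * (K * ‖y - x‖) := by gcongr
  have h5 : ε / (2 * K) * (K * ‖y - x‖) = ε / 2 * ‖y - x‖ := by field_simp
  have h6 : r y ≤ ε / 2 * ‖y - x‖ := (le_abs_self _).trans h3
  linarith

theorem frechetNormalCone_univ_subset (x : X) : frechetNormalCone univ x ⊆ {0} := by
  intro v hv
  by_contra hne
  have hpos : 0 < ‖v‖ := norm_pos_iff.2 hne
  obtain ⟨δ, hδ, h⟩ := hv (‖v‖ / 2) (by positivity)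
  set t := δ / (2 * ‖v‖) with ht
  have htp : 0 < t := by positivity
  have hn : ‖t • v‖ = t * ‖v‖ := by rw [norm_smul, Real.norm_of_nonneg htp.le]
  have hlt : t * ‖v‖ < δ := by
    rw [ht]; field_simp; linarith
  have := h (x + t • v) (mem_univ _) (by simpa [hn] using hlt)
  rw [add_sub_cancel_left, hn, inner_smul_right, real_inner_self_eq_norm_sq] at this
  nlinarith [mul_pos htp (mul_pos hpos hpos)]

end FrechetNormals

/-- A linear map between finite-dimensional spaces has a continuous generalized inverse. -/
theorem ContinuousLinearMap.exists_generalizedInverse {E G : Type*}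
    [NormedAddCommGroup E] [NormedSpace ℝ E]
    [NormedAddCommGroup G] [NormedSpace ℝ G] [FiniteDimensional ℝ G] (C : E →L[ℝ] G) :
    ∃ S : G →L[ℝ] E, ∀ x, C (S (C x)) = C x := by
  obtain ⟨g, hg⟩ := C.toLinearMap.rangeRestrict.exists_rightInverse_of_surjective
    (LinearMap.range_rangeRestrict _)
  obtain ⟨S, hS⟩ := LinearMap.exists_extend g
  refine ⟨LinearMap.toContinuousLinearMap S, fun x => ?_⟩
  have h1 := LinearMap.congr_fun hS (C.toLinearMap.rangeRestrict x)
  have h2 := congrArg Subtype.val (LinearMap.congr_fun hg (C.toLinearMap.rangeRestrict x))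
  simp only [LinearMap.comp_apply, Submodule.subtype_apply] at h1
  simp only [LinearMap.comp_apply, ← h1] at h2
  exact h2

theorem isLittleO_inner_linearization {X E H : Type*} [NormedAddCommGroup X] [NormedSpace ℝ X]
    [NormedAddCommGroup E] [NormedSpace ℝ E] [NormedAddCommGroup H] [InnerProductSpace ℝ H]
    {f : E → H} {z : E} (hf : DifferentiableAt ℝ f z) (ξ : H) {g : X → E} {x : X} (hg : DifferentiableAt ℝ g x)
    (hgx : g x = z) :
    (fun y => ⟪ξ, f (g y) - f z - fderiv ℝ f z (g y - z)⟫) =o[𝓝 x] fun y => y - x := by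
  subst hgx
  have h1 := (hf.hasFDerivAt.isLittleO.comp_tendsto hg.continuousAt.tendsto).trans_isBigO
    hg.isBigO_sub
  refine (Asymptotics.IsBigO.of_bound ‖ξ‖ (Eventually.of_forall fun y => ?_)).trans_isLittleO h1
  exact norm_inner_le_norm _ _

section FrechetCoderivative

variable {E G : Type*} [NormedAddCommGroup E] [InnerProductSpace ℝ E]
  [NormedAddCommGroup G] [InnerProductSpace ℝ G]

/-- Fréchet coderivative: the analogue of `coDeriv` for the Fréchet normal cone. -/
def frechetCoDeriv (Fm : E → Set G) (x : E) (y : G) : G → Set E := fun z =>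
  { w | WithLp.toLp 2 (w, -z) ∈
      frechetNormalCone (WithLp.toLp 2 '' svGraph Fm) (WithLp.toLp 2 (x, y)) }

theorem mem_coDeriv_iff {Fm : E → Set G} {x : E} {y z : G} {w : E} :
    w ∈ coDeriv Fm x y z ↔ ∃ (xk : ℕ → E) (yk : ℕ → G) (wk : ℕ → E) (zk : ℕ → G),
      (∀ k, yk k ∈ Fm (xk k)) ∧ Tendsto xk atTop (𝓝 x) ∧ Tendsto yk atTop (𝓝 y) ∧
      Tendsto wk atTop (𝓝 w) ∧ Tendsto zk atTop (𝓝 z) ∧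
      ∀ k, wk k ∈ frechetCoDeriv Fm (xk k) (yk k) (zk k) := by
  constructor
  · rintro ⟨pk, vk, hmem, hp, hv, hN⟩
    have hc : Continuous (WithLp.ofLp : WithLp 2 (E × G) → E × G) :=
      WithLp.prod_continuous_ofLp 2 E G
    have hp' := (hc.tendsto _).comp hp
    have hv' := (hc.tendsto _).comp hv
    refine ⟨fun k => (pk k).fst, fun k => (pk k).snd, fun k => (vk k).fst, fun k => -(vk k).snd,
      fun k => ?_, (continuous_fst.tendsto _).comp hp', (continuous_snd.tendsto _).comp hp',
      (continuous_fst.tendsto _).comp hv', ?_, fun k => ?_⟩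
    · obtain ⟨q, hq, hqe⟩ := hmem k
      simp only [← hqe]
      exact hq
    · simpa using ((continuous_snd.tendsto _).comp hv').neg
    · simp only [frechetCoDeriv, mem_ofPred_eq, neg_neg]
      exact hN k
  · rintro ⟨xk, yk, wk, zk, hmem, hx, hy, hw, hz, hN⟩
    have hc : Continuous (WithLp.toLp 2 : E × G → WithLp 2 (E × G)) :=
      WithLp.prod_continuous_toLp 2 E G
    exact ⟨fun k => WithLp.toLp 2 (xk k, yk k), fun k => WithLp.toLp 2 (wk k, -zk k),
      fun k => ⟨_, hmem k, rfl⟩, (hc.tendsto _).comp (hx.prodMk_nhds hy),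
      (hc.tendsto _).comp (hw.prodMk_nhds hz.neg), hN⟩

end FrechetCoderivative

section CompositeSum

variable {E G H K : Type*} [NormedAddCommGroup E] [InnerProductSpace ℝ E] [CompleteSpace E]
  [NormedAddCommGroup G] [InnerProductSpace ℝ G] [CompleteSpace G]
  [NormedAddCommGroup H] [InnerProductSpace ℝ H] [CompleteSpace H]
  [NormedAddCommGroup K] [InnerProductSpace ℝ K]

/-- The set-valued map `z ↦ f z + B (F (C z))`. -/
def compositeSum (f : E → H) (B : K →L[ℝ] H) (C : E →L[ℝ] G) (Fm : G → Set K) : E → Set H :=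
  fun z => {w | ∃ v ∈ Fm (C z), w = f z + B v}

/-- The restriction of a set-valued map to the range of `C`. -/
def restrictRange (C : E →L[ℝ] G) (Fm : G → Set K) : G → Set K :=
  fun u => {v | (∃ z, C z = u) ∧ v ∈ Fm u}

variable {f : E → H} {B : K →L[ℝ] H} {C : E →L[ℝ] G} {Fm : G → Set K} {z : E}

theorem frechetCoDeriv_compositeSum_of_restrictRange [CompleteSpace K] (hf : DifferentiableAt ℝ f z)
    {L : H →L[ℝ] K} (hL : ∀ v, L (B v) = v) {v : K} {u : G} {ξ : H}
    (hu : u ∈ frechetCoDeriv (restrictRange C Fm) (C z) v (B.adjoint ξ)) :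
    (fderiv ℝ f z).adjoint ξ + C.adjoint u ∈
      frechetCoDeriv (compositeSum f B C Fm) z (f z + B v) ξ := by
  let φ : WithLp 2 (E × H) → WithLp 2 (G × K) := fun y =>
    WithLp.toLp 2 (C y.fst, L (y.snd - f y.fst))
  have hfst : DifferentiableAt ℝ (fun y : WithLp 2 (E × H) => y.fst)
      (WithLp.toLp 2 (z, f z + B v)) := (WithLp.fstL 2 ℝ E H).differentiableAt
  have hsnd : DifferentiableAt ℝ (fun y : WithLp 2 (E × H) => y.snd)
      (WithLp.toLp 2 (z, f z + B v)) := (WithLp.sndL 2 ℝ E H).differentiableAt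
  have hφx : φ (WithLp.toLp 2 (z, f z + B v)) = WithLp.toLp 2 (C z, v) := by
    simp [φ, hL]
  refine frechetNormalCone_of_pullback (φ := φ) (v := WithLp.toLp 2 (u, -B.adjoint ξ)) ?_ ?_
    (isLittleO_inner_linearization hf (-ξ) hfst rfl) ?_ (by rw [hφx]; exact hu)
  · rintro _ ⟨⟨z', p⟩, ⟨v', hv', rfl : p = f z' + B v'⟩, rfl⟩
    refine ⟨(C z', v'), ⟨⟨z', rfl⟩, hv'⟩, ?_⟩
    simp [φ, hL]
  · have hf' : DifferentiableAt ℝ (fun y : WithLp 2 (E × H) => f y.fst)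
      (WithLp.toLp 2 (z, f z + B v)) := DifferentiableAt.comp _ hf hfst
    exact (WithLp.prodContinuousLinearEquiv 2 ℝ G K).symm.differentiableAt.comp _
      ((C.differentiableAt.comp _ hfst).prodMk (L.differentiableAt.comp _ (hsnd.sub hf')))
  · rintro _ ⟨⟨z', p⟩, ⟨v', hv', rfl : p = f z' + B v'⟩, rfl⟩
    rw [hφx]
    simp [φ, hL, WithLp.prod_inner_apply, inner_add_left, inner_add_right,
      inner_sub_right, ContinuousLinearMap.adjoint_inner_left]
    ring

theorem frechetCoDeriv_restrictRange_of_compositeSum [CompleteSpace K]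
    (hf : DifferentiableAt ℝ f z)
    {S : G →L[ℝ] E} (hS : ∀ x, C (S (C x)) = C x) {v : K} {w : E} {ξ : H}
    (hw : w ∈ frechetCoDeriv (compositeSum f B C Fm) z (f z + B v) ξ) :
    S.adjoint (w - (fderiv ℝ f z).adjoint ξ) ∈
      frechetCoDeriv (restrictRange C Fm) (C z) v (B.adjoint ξ) := by
  let g : WithLp 2 (G × K) → E := fun y => z + S (y.fst - C z)
  let φ : WithLp 2 (G × K) → WithLp 2 (E × H) := fun y =>
    WithLp.toLp 2 (g y, f (g y) + B y.snd)
  have hg : DifferentiableAt ℝ g (WithLp.toLp 2 (C z, v)) :=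
    (S.differentiableAt.comp _
      ((WithLp.fstL 2 ℝ G K).differentiableAt.sub_const (C z))).const_add z
  have hgx : g (WithLp.toLp 2 (C z, v)) = z := by simp [g]
  have hφx : φ (WithLp.toLp 2 (C z, v)) = WithLp.toLp 2 (z, f z + B v) := by
    simp [φ, hgx]
  refine frechetNormalCone_of_pullback (φ := φ) (v := WithLp.toLp 2 (w, -ξ)) ?_ ?_
    (isLittleO_inner_linearization hf ξ hg hgx) ?_ (by rw [hφx]; exact hw)
  · rintro _ ⟨⟨_, v'⟩, ⟨⟨z', rfl⟩, hv'⟩, rfl⟩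
    refine ⟨_, ⟨v', ?_, rfl⟩, rfl⟩
    have : C (z + S (C z' - C z)) = C z' := by
      rw [map_add, ← map_sub, hS, map_sub, add_sub_cancel]
    exact this.symm ▸ hv'
  · have hf' : DifferentiableAt ℝ (fun y => f (g y)) (WithLp.toLp 2 (C z, v)) :=
      DifferentiableAt.comp _ (hgx.symm ▸ hf) hg
    exact (WithLp.prodContinuousLinearEquiv 2 ℝ E H).symm.differentiableAt.comp _
      (hg.prodMk (hf'.add (B.differentiableAt.comp _ (WithLp.sndL 2 ℝ G K).differentiableAt)))
  · rintro _ ⟨⟨u', v'⟩, -, rfl⟩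
    rw [hφx]
    simp [φ, g, WithLp.prod_inner_apply, inner_sub_left, inner_add_right,
      inner_sub_right, ContinuousLinearMap.adjoint_inner_left]
    ring

theorem eq_of_mem_frechetCoDeriv_compositeSum (hf : DifferentiableAt ℝ f z)
    {S : G →L[ℝ] E} (hS : ∀ x, C (S (C x)) = C x) {v : K} (hv : v ∈ Fm (C z)) {w : E} {ξ : H}
    (hw : w ∈ frechetCoDeriv (compositeSum f B C Fm) z (f z + B v) ξ) :
    w = (fderiv ℝ f z).adjoint ξ + C.adjoint (S.adjoint (w - (fderiv ℝ f z).adjoint ξ)) := by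
  let P : E →L[ℝ] E := ContinuousLinearMap.id ℝ E - S.comp C
  have hCP : ∀ x, C (P x) = 0 := fun x => by simp [P, hS]
  let g : E → E := fun y => z + P (y - z)
  let φ : E → WithLp 2 (E × H) := fun y => WithLp.toLp 2 (g y, f (g y) + B v)
  have hg : DifferentiableAt ℝ g z :=
    (P.differentiableAt.comp _ (differentiableAt_id.sub_const z)).const_add z
  have hgx : g z = z := by simp [g]
  have hφx : φ z = WithLp.toLp 2 (z, f z + B v) := by simp [φ, hgx]
  have key : P.adjoint (w - (fderiv ℝ f z).adjoint ξ) ∈ frechetNormalCone univ z := by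
    refine frechetNormalCone_of_pullback (φ := φ) (v := WithLp.toLp 2 (w, -ξ)) ?_ ?_
      (isLittleO_inner_linearization hf ξ hg hgx) ?_ (by rw [hφx]; exact hw)
    · intro y _
      exact ⟨_, ⟨v, by simpa [g, hCP] using hv, rfl⟩, rfl⟩
    · have hf' : DifferentiableAt ℝ (fun y => f (g y)) z :=
        DifferentiableAt.comp _ (hgx.symm ▸ hf) hg
      exact (WithLp.prodContinuousLinearEquiv 2 ℝ E H).symm.differentiableAt.comp _
        (hg.prodMk (hf'.add_const (B v)))
    · intro y _
      rw [hφx]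
      simp only [φ, g, WithLp.prod_inner_apply, inner_sub_left, inner_add_right,
        inner_sub_right, ContinuousLinearMap.adjoint_inner_left, map_sub, inner_neg_left,
        add_sub_cancel_left]
      ring
  have h0 : P.adjoint (w - (fderiv ℝ f z).adjoint ξ) = 0 := frechetNormalCone_univ_subset z key
  refine eq_add_of_sub_eq' (sub_eq_zero.1 ?_)
  refine ext_inner_right ℝ fun x => ?_
  rw [← h0]
  simp only [P, inner_sub_left, inner_sub_right, ContinuousLinearMap.adjoint_inner_left, sub_apply,
    ContinuousLinearMap.comp_apply, ContinuousLinearMap.id_apply]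

theorem coDeriv_compositeSum [CompleteSpace K] (hf : ContDiff ℝ 1 f)
    {L : H →L[ℝ] K} (hL : ∀ v, L (B v) = v)
    {S : G →L[ℝ] E} (hS : ∀ x, C (S (C x)) = C x) (v : K) (ξ : H) :
    coDeriv (compositeSum f B C Fm) z (f z + B v) ξ =
      (fun w => (fderiv ℝ f z).adjoint ξ + C.adjoint w) ''
        coDeriv (restrictRange C Fm) (C z) v (B.adjoint ξ) := by
  have hd : ∀ x, DifferentiableAt ℝ f x := fun x => hf.differentiable one_ne_zero x
  have hgrad : ∀ {zk : ℕ → E} {ξk : ℕ → H}, Tendsto zk atTop (𝓝 z) → Tendsto ξk atTop (𝓝 ξ) →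
      Tendsto (fun k => (fderiv ℝ f (zk k)).adjoint (ξk k)) atTop
        (𝓝 ((fderiv ℝ f z).adjoint ξ)) := by
    intro zk ξk hz hξ
    have hadj : Tendsto (fun k => (fderiv ℝ f (zk k)).adjoint) atTop
        (𝓝 (fderiv ℝ f z).adjoint) :=
      ((ContinuousLinearMap.adjoint (𝕜 := ℝ) (E := E) (F := H)).continuous.tendsto _).comp
        (((hf.continuous_fderiv one_ne_zero).tendsto z).comp hz)
    exact (isBoundedBilinearMap_apply.continuous.tendsto _).comp (hadj.prodMk_nhds hξ)
  ext w
  rw [mem_coDeriv_iff]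
  constructor
  · rintro ⟨zk, pk, wk, ξk, hmem, hz, hp, hw, hξ, hN⟩
    choose vk hvk hpk using hmem
    have hu := (S.adjoint.continuous.tendsto _).comp (hw.sub (hgrad hz hξ))
    refine ⟨S.adjoint (w - (fderiv ℝ f z).adjoint ξ), mem_coDeriv_iff.2
      ⟨fun k => C (zk k), vk, _, fun k => B.adjoint (ξk k), fun k => ⟨⟨_, rfl⟩, hvk k⟩,
        (C.continuous.tendsto _).comp hz, ?_, hu, (B.adjoint.continuous.tendsto _).comp hξ,
        fun k => frechetCoDeriv_restrictRange_of_compositeSum (hd _) hS (hpk k ▸ hN k)⟩, ?_⟩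
    · have := (L.continuous.tendsto _).comp
        (hp.sub ((hf.continuous.tendsto z).comp hz))
      simpa [Function.comp_def, hpk, hL] using this
    · refine tendsto_nhds_unique ((hgrad hz hξ).add ((C.adjoint.continuous.tendsto _).comp hu))
        (hw.congr fun k => ?_)
      exact eq_of_mem_frechetCoDeriv_compositeSum (hd _) hS (hvk k) (hpk k ▸ hN k)
  · rintro ⟨u, hu, rfl⟩
    obtain ⟨yk, vk, uk, ηk, hmem, hy, hv, hu, hη, hN⟩ := mem_coDeriv_iff.1 hu
    let zk : ℕ → E := fun k => z + S (yk k - C z)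
    let ξk : ℕ → H := fun k => ξ + L.adjoint (ηk k - B.adjoint ξ)
    have hzy : ∀ k, C (zk k) = yk k := fun k => by
      obtain ⟨x, hx⟩ := (hmem k).1
      simp only [zk]
      rw [← hx, map_add, ← map_sub, hS, map_sub, add_sub_cancel]
    have hBL : ∀ η, B.adjoint (L.adjoint η) = η := fun η => by
      refine ext_inner_right ℝ fun x => ?_
      rw [ContinuousLinearMap.adjoint_inner_left, ContinuousLinearMap.adjoint_inner_left, hL]
    have hξη : ∀ k, B.adjoint (ξk k) = ηk k := fun k => by
      simp only [ξk]
      rw [map_add, hBL, add_sub_cancel]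
    have hz : Tendsto zk atTop (𝓝 z) := by
      simpa [zk, Function.comp_def] using
        ((S.continuous.tendsto _).comp (hy.sub_const (C z))).const_add z
    have hξ : Tendsto ξk atTop (𝓝 ξ) := by
      simpa only [ξk, Function.comp_def, sub_self, map_zero, add_zero] using
        ((L.adjoint.continuous.tendsto _).comp (hη.sub_const (B.adjoint ξ))).const_add ξ
    refine ⟨zk, fun k => f (zk k) + B (vk k), _, ξk,
      fun k => ⟨vk k, (hzy k).symm ▸ (hmem k).2, rfl⟩, hz,
      ((hf.continuous.tendsto z).comp hz).add ((B.continuous.tendsto v).comp hv),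
      (hgrad hz hξ).add ((C.adjoint.continuous.tendsto _).comp hu), hξ, fun k => ?_⟩
    exact frechetCoDeriv_compositeSum_of_restrictRange (hd _) hL
      (by rw [hzy, hξη]; exact hN k)

end CompositeSum

theorem Matrix.adjoint_toContinuousLinearMap_toEuclideanLin {n m : ℕ}
    (A : Matrix (Fin n) (Fin m) ℝ) :
    ContinuousLinearMap.adjoint (LinearMap.toContinuousLinearMap (Matrix.toEuclideanLin A)) =
      LinearMap.toContinuousLinearMap (Matrix.toEuclideanLin A.transpose) := by
  rw [← LinearMap.adjoint_toContinuousLinearMap, ← Matrix.toEuclideanLin_conjTranspose_eq_adjoint,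
    Matrix.conjTranspose_eq_transpose_of_trivial]

theorem Matrix.toEuclideanLin_pinv_apply {n m : ℕ} {B : Matrix (Fin n) (Fin m) ℝ}
    (hB : Function.Injective (Matrix.toEuclideanLin B)) (v : EuclideanSpace ℝ (Fin m)) :
    Matrix.toEuclideanLin ((B.transpose * B)⁻¹ * B.transpose) (Matrix.toEuclideanLin B v) = v := by
  have hinj : Function.Injective B.mulVec := fun x y h =>
    (WithLp.toLp_injective 2) (hB (congrArg (WithLp.toLp 2) h))
  have hpos : (B.transpose * B).PosDef := by
    simpa [Matrix.conjTranspose_eq_transpose_of_trivial] using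
      Matrix.PosDef.conjTranspose_mul_self B hinj
  have hdet := (Matrix.isUnit_iff_isUnit_det _).1 hpos.isUnit
  apply WithLp.ofLp_injective 2
  simp only [Matrix.ofLp_toLpLin, Matrix.toLin'_apply, Matrix.mulVec_mulVec]
  rw [Matrix.mul_assoc, Matrix.nonsing_inv_mul _ hdet, Matrix.one_mulVec]

/-- Coderivative of the sum for the generalized equation `f(z) + B F(Cz) ∋ p`. -/
theorem coDeriv_of_GE_sum {n m : ℕ}
    (f : EuclideanSpace ℝ (Fin n) → EuclideanSpace ℝ (Fin n)) (hf : ContDiff ℝ 1 f)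
    (Fm : EuclideanSpace ℝ (Fin m) → Set (EuclideanSpace ℝ (Fin m)))
    (hFm : IsClosed (svGraph Fm))
    (B : Matrix (Fin n) (Fin m) ℝ) (hB : Function.Injective (Matrix.toEuclideanLin B))
    (C : Matrix (Fin m) (Fin n) ℝ)
    (Phi : EuclideanSpace ℝ (Fin n) → Set (EuclideanSpace ℝ (Fin n)))
    (hPhi : Phi = fun z =>
      {w | ∃ v ∈ Fm (Matrix.toEuclideanLin C z), w = f z + Matrix.toEuclideanLin B v})
    (FC : EuclideanSpace ℝ (Fin m) → Set (EuclideanSpace ℝ (Fin m)))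
    (hFC : FC = fun u => {v | (∃ z, Matrix.toEuclideanLin C z = u) ∧ v ∈ Fm u})
    (zbar pbar : EuclideanSpace ℝ (Fin n)) (hzp : pbar ∈ Phi zbar)
    (vbar : EuclideanSpace ℝ (Fin m))
    (hvbar : vbar = Matrix.toEuclideanLin ((B.transpose * B)⁻¹ * B.transpose) (pbar - f zbar))
    (ξ : EuclideanSpace ℝ (Fin n)) :
    coDeriv Phi zbar pbar ξ =
      (fun w => ContinuousLinearMap.adjoint (fderiv ℝ f zbar) ξ +
          Matrix.toEuclideanLin C.transpose w) ''
        coDeriv FC (Matrix.toEuclideanLin C zbar) vbar (Matrix.toEuclideanLin B.transpose ξ) := by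
  set B' := LinearMap.toContinuousLinearMap (Matrix.toEuclideanLin B) with hB'
  set C' := LinearMap.toContinuousLinearMap (Matrix.toEuclideanLin C) with hC'
  obtain ⟨S, hS⟩ := C'.exists_generalizedInverse
  have hL := Matrix.toEuclideanLin_pinv_apply hB
  subst hPhi
  obtain ⟨v, -, rfl⟩ := hzp
  rw [add_sub_cancel_left, hL] at hvbar
  subst hvbar hFC
  have h := coDeriv_compositeSum (B := B') (Fm := Fm) (z := zbar) hf
    (L := LinearMap.toContinuousLinearMap
      (Matrix.toEuclideanLin ((B.transpose * B)⁻¹ * B.transpose))) hL hS vbar ξ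
  rw [hB', hC', Matrix.adjoint_toContinuousLinearMap_toEuclideanLin,
    Matrix.adjoint_toContinuousLinearMap_toEuclideanLin] at h
  exact h

end
end
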